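/- Upward closure of the Prefix Last-Token Condition: let s be a nonempty string and let w be a non-atomic canonical token that is a suffix of s and satisfies the Prefix Last-Token Condition with respect to s. Then suc(w) (which is also a canonical suffix of s) satisfies the Prefix Last-Token Condition with respect to s. -/

import Mathlib

/-!
Common BPE formalization preamble.

A token is a (nonempty) string over the alphabet `α`, modeled as `List α`.
A merge rule is a pair of tokens; a dictionary is an ordered list of rules
(earlier rules have strictly higher priority).
-/

namespace BPE

variable {α : Type*} [DecidableEq α]

/-- A token is a string over the alphabet (nonemptiness is imposed by hypotheses). -/
abbrev Token (α : Type*) := List α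

/-- A merge rule is an ordered pair of tokens. -/
abbrev Rule (α : Type*) := Token α × Token α

/-- A dictionary is an ordered list of merge rules; earlier = higher priority. -/
abbrev Dict (α : Type*) := List (Rule α)

/-- Apply a single merge rule to a token list, scanning left to right and replacing
each adjacent occurrence of `r.1` followed by `r.2` by the concatenated token,
resuming the scan after the newly formed token (no overlaps). -/
def applyRule (r : Rule α) : List (Token α) → List (Token α)
  | [] => []
  | [t] => [t]
  | t :: u :: rest =>
      if t = r.1 ∧ u = r.2 then (r.1 ++ r.2) :: applyRule r rest
      else t :: applyRule r (u :: rest)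

/-- `φ₀(s)`: the list of single-character tokens of `s`. -/
def phi0 (s : List α) : List (Token α) := s.map (fun c => [c])

/-- `φ_k(s)`: the token list after applying the first `k` rules of `D` to `s`. -/
def phiK (D : Dict α) (k : ℕ) (s : List α) : List (Token α) :=
  (D.take k).foldl (fun φ r => applyRule r φ) (phi0 s)

/-- The BPE tokenization `𝕋_D(s)`. -/
def tokenize (D : Dict α) (s : List α) : List (Token α) :=
  phiK D D.length s

/-- Detokenization `π`: concatenation of the tokens. -/
def detok (φ : List (Token α)) : List α := φ.flatten

/-- A dictionary is valid if all rule components are genuine (nonempty) tokens. -/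
def ValidDict (D : Dict α) : Prop := ∀ r ∈ D, r.1 ≠ [] ∧ r.2 ≠ []

/-- A token `t` is canonical if `𝕋_D(t) = [t]`. -/
def IsCanonical (D : Dict α) (t : Token α) : Prop := tokenize D t = [t]

/-- The last token `θ(s)`: last element of `𝕋_D(s)` (defaulting to `[]`). -/
def theta (D : Dict α) (s : List α) : Token α := (tokenize D s).getLastD []

/-- `j` (0-based) is the index of the canonical rule of `t`:
`φ_j(t)` has exactly two tokens and `φ_{j+1}(t) = [t]`. -/
def IsCanonicalRuleIdx (D : Dict α) (t : Token α) (j : ℕ) : Prop :=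
  j < D.length ∧ (phiK D j t).length = 2 ∧ phiK D (j + 1) t = [t]

open Classical in
/-- The (0-based) index of the canonical rule of `t` (junk value `0` if none exists). -/
noncomputable def canonIdx (D : Dict α) (t : Token α) : ℕ :=
  if h : ∃ j, IsCanonicalRuleIdx D t j then h.choose else 0

/-- Predecessor `pre(t)`: first token of the two-token stage `φ_{j-1}(t)`. -/
noncomputable def pre (D : Dict α) (t : Token α) : Token α :=
  (phiK D (canonIdx D t) t).headD []

/-- Successor `suc(t)`: second token of the two-token stage `φ_{j-1}(t)`. -/
noncomputable def suc (D : Dict α) (t : Token α) : Token α :=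
  (phiK D (canonIdx D t) t).getLastD []

/-- `InPath D x a` means `a ∈ P(x)`: `a` is obtained from `x` by iterating `suc`,
i.e. `a` lies on the ancestor path of `x` in the Successor Forest. -/
def InPath (D : Dict α) (x a : Token α) : Prop :=
  ∃ n : ℕ, (suc D)^[n] x = a

/-- `s` with the suffix `u` removed. -/
def dropSuffix (s u : List α) : List α := s.take (s.length - u.length)

/-- The Prefix Last-Token Condition of the canonical suffix token `t`
with respect to the string `s`. Atomic tokens satisfy it by definition;
a non-atomic token must satisfy Reachability and Priority dominance. -/
def PLTC (D : Dict α) (s t : Token α) : Prop :=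
  t.length = 1 ∨
    (1 < t.length ∧
      InPath D (theta D (dropSuffix s (suc D t))) (pre D t) ∧
      (theta D (dropSuffix s (suc D t)) ≠ pre D t →
        ∀ u : Token α, 1 < u.length → IsCanonical D u → suc D u = pre D t →
          InPath D (theta D (dropSuffix s (suc D t))) u →
          canonIdx D t < canonIdx D u))


/-!
The token boundary inside `s = a ++ b` between `a` and `b` persists through the first rules until
some rule merges across it. For a non-atomic canonical suffix `t = pre t ++ suc t` of `s = a ++ t`,
the Prefix Last-Token Condition says exactly that the boundary between `a` and `pre t` persists
through the canonical rule of `t`: the last token of a string at any stage lies on the ancestor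
path of its final last token, and canonical rule indices increase along that path.

Whether a rule merges across a boundary depends only on the token that follows it. Write
`w = p ++ q` and `q = p' ++ q'`. The rule of `q` precedes that of `w`, so up to and including the
rule of `q` the boundaries `a | p` and `p | q` persist, hence so does `p | p'`, and the two glue to
the boundary `a ++ p | p'`, which is the condition for `q`.
-/

section ApplyRule

variable (r : Rule α)

@[simp]
theorem flatten_applyRule (φ : List (Token α)) : (applyRule r φ).flatten = φ.flatten := by
  induction φ using applyRule.induct r with
  | case1 => simp [applyRule]
  | case2 t => simp [applyRule]
  | case3 t u φ hm ih => simp [applyRule, hm, ih]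
  | case4 t u φ hm ih => rw [applyRule, if_neg hm, List.flatten_cons, ih]; rfl

theorem length_le_two_mul_length_applyRule (φ : List (Token α)) :
    φ.length ≤ 2 * (applyRule r φ).length := by
  induction φ using applyRule.induct r with
  | case1 => simp
  | case2 t => simp [applyRule]
  | case3 t u φ hm ih => rw [applyRule, if_pos hm]; grind
  | case4 t u φ hm ih => rw [applyRule, if_neg hm]; grind

theorem ne_nil_of_mem_applyRule {φ : List (Token α)} (hφ : ∀ t ∈ φ, t ≠ []) :
    ∀ t ∈ applyRule r φ, t ≠ [] := by
  induction φ using applyRule.induct r with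
  | case1 => simp [applyRule]
  | case2 t => simpa [applyRule] using hφ
  | case3 t u φ hm ih => rw [applyRule, if_pos hm]; grind [List.append_eq_nil_iff]
  | case4 t u φ hm ih => rw [applyRule, if_neg hm]; grind

theorem exists_append_of_applyRule_eq_append {φ c d : List (Token α)}
    (h : applyRule r φ = c ++ d) :
    ∃ a b, φ = a ++ b ∧ applyRule r a = c ∧ applyRule r b = d := by
  induction φ using applyRule.induct r generalizing c with
  | case1 => exact ⟨[], [], by simp_all [applyRule]⟩
  | case2 t =>
    rcases List.singleton_eq_append_iff.1 h with ⟨rfl, rfl⟩ | ⟨rfl, rfl⟩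
    · exact ⟨[], [t], by simp [applyRule]⟩
    · exact ⟨[t], [], by simp [applyRule]⟩
  | case3 t u φ hm ih =>
    obtain - | ⟨x, c⟩ := c
    · exact ⟨[], t :: u :: φ, rfl, rfl, h⟩
    · rw [applyRule, if_pos hm, List.cons_append, List.cons.injEq] at h
      obtain ⟨a, b, rfl, rfl, hb⟩ := ih h.2
      exact ⟨t :: u :: a, b, rfl, by rw [applyRule, if_pos hm, h.1], hb⟩
  | case4 t u φ hm ih =>
    obtain - | ⟨x, c⟩ := c
    · exact ⟨[], t :: u :: φ, rfl, rfl, h⟩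
    · rw [applyRule, if_neg hm, List.cons_append, List.cons.injEq] at h
      obtain ⟨a, b, hab, rfl, hb⟩ := ih h.2
      refine ⟨t :: a, b, by rw [hab, List.cons_append], ?_, hb⟩
      obtain - | ⟨v, a⟩ := a
      · simp [applyRule, h.1]
      · obtain rfl : u = v := by simp_all
        rw [applyRule, if_neg hm, h.1]

theorem applyRule_append_cons_iff {u : Token α} (hu : u ≠ []) (A B C : List (Token α)) :
    applyRule r (A ++ u :: B) = applyRule r A ++ applyRule r (u :: B) ↔
      applyRule r (A ++ u :: C) = applyRule r A ++ applyRule r (u :: C) := by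
  induction A using applyRule.induct r with
  | case1 => simp [applyRule]
  | case2 t =>
    by_cases hm : t = r.1 ∧ u = r.2
    · obtain ⟨rfl, rfl⟩ := hm
      -- Since `u ≠ []`, the merged token differs from `r.1`, so both equations fail.
      simp [applyRule, hu]
    · simp [applyRule, hm]
  | case3 t v A hm ih => simpa [applyRule, hm] using ih
  | case4 t v A hm ih => simpa [applyRule, hm] using ih

end ApplyRule

section Stages

variable (D : Dict α) (k : ℕ) (s : List α)

@[simp]
theorem phiK_zero : phiK D 0 s = phi0 s := by simp [phiK]

theorem phiK_succ_eq_or :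
    phiK D (k + 1) = phiK D k ∨ ∃ r, ∀ s, phiK D (k + 1) s = applyRule r (phiK D k s) := by
  rcases lt_or_ge k D.length with hk | hk
  · refine .inr ⟨D[k], fun s ↦ ?_⟩
    rw [phiK, phiK, ← List.take_concat_get' D k hk, List.foldl_append, List.foldl_cons,
      List.foldl_nil]
  · refine .inl (funext fun s ↦ ?_)
    rw [phiK, phiK, List.take_of_length_le hk, List.take_of_length_le (hk.trans k.le_succ)]

@[simp]
theorem flatten_phiK : (phiK D k s).flatten = s := by
  induction k with
  | zero => simp [phi0, ← List.flatMap_def]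
  | succ k ih => rcases phiK_succ_eq_or D k with h | ⟨r, h⟩ <;> simp [h, ih]

theorem ne_nil_of_mem_phiK : ∀ t ∈ phiK D k s, t ≠ [] := by
  induction k with
  | zero => simp [phi0]
  | succ k ih =>
    rcases phiK_succ_eq_or D k with h | ⟨r, h⟩
    · rwa [h]
    · rw [h]
      exact ne_nil_of_mem_applyRule r ih

variable {D k s}

theorem phiK_ne_nil (hs : s ≠ []) : phiK D k s ≠ [] := fun h ↦
  hs (by simpa [h] using (flatten_phiK D k s).symm)

theorem phiK_eq_singleton_of_le {l : ℕ} {t : Token α} (h : phiK D k s = [t]) (hkl : k ≤ l) :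
    phiK D l s = [t] := by
  induction l, hkl using Nat.le_induction with
  | base => exact h
  | succ l _ ih => rcases phiK_succ_eq_or D l with h | ⟨r, h⟩ <;> simp [h, ih, applyRule]

theorem phiK_of_length_eq_one {t : Token α} (ht : t.length = 1) : phiK D k t = [t] := by
  obtain ⟨x, rfl⟩ := List.length_eq_one_iff.1 ht
  exact phiK_eq_singleton_of_le (k := 0) (by simp [phi0]) k.zero_le

theorem phiK_flatten_of_eq_append {c d : List (Token α)} (h : phiK D k s = c ++ d) :
    phiK D k c.flatten = c ∧ phiK D k d.flatten = d := by
  induction k generalizing c d with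
  | zero =>
    obtain ⟨a, b, rfl, rfl, rfl⟩ := List.map_eq_append_iff.1 ((phiK_zero D s).symm.trans h)
    simp [phi0, ← List.flatMap_def]
  | succ k ih =>
    rcases phiK_succ_eq_or D k with hk | ⟨r, hk⟩
    · rw [hk] at h ⊢
      exact ih h
    · rw [hk] at h
      obtain ⟨a, b, hab, rfl, rfl⟩ := exists_append_of_applyRule_eq_append r h
      simp [hk, ih hab]

end Stages

section Boundary

/-- The boundary between `a` and `b` in the string `a ++ b` is still a token boundary at stage `k`,
that is, none of the first `k` rules merges across it. This is encoded as the two sides being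
tokenized independently of each other. -/
def IsBoundary (D : Dict α) (k : ℕ) (a b : List α) : Prop :=
  phiK D k (a ++ b) = phiK D k a ++ phiK D k b

variable {D : Dict α} {k l : ℕ} {a b c s : List α}

theorem isBoundary_zero (D : Dict α) (a b : List α) : IsBoundary D 0 a b := by
  simp [IsBoundary, phi0]

theorem isBoundary_flatten {φ ψ : List (Token α)} (h : phiK D k s = φ ++ ψ) :
    IsBoundary D k φ.flatten ψ.flatten := by
  obtain ⟨hφ, hψ⟩ := phiK_flatten_of_eq_append h
  rw [IsBoundary, hφ, hψ, ← List.flatten_append, ← h, flatten_phiK]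

theorem IsBoundary.of_succ (h : IsBoundary D (k + 1) a b) : IsBoundary D k a b := by
  rcases phiK_succ_eq_or D k with hk | ⟨r, hk⟩
  · rwa [IsBoundary, hk] at h
  · rw [IsBoundary, hk, hk, hk] at h
    obtain ⟨φ, ψ, hφψ, hφ, hψ⟩ := exists_append_of_applyRule_eq_append r h
    have ha : φ.flatten = a := by simpa using congrArg List.flatten hφ
    have hb : ψ.flatten = b := by simpa using congrArg List.flatten hψ
    exact ha ▸ hb ▸ isBoundary_flatten hφψ

theorem IsBoundary.of_le (h : IsBoundary D k a b) (hlk : l ≤ k) : IsBoundary D l a b := by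
  induction k, hlk using Nat.le_induction with
  | base => exact h
  | succ k _ ih => exact ih h.of_succ

theorem isBoundary_succ_iff {r : Rule α} (hr : ∀ s, phiK D (k + 1) s = applyRule r (phiK D k s)) :
    IsBoundary D (k + 1) a b ↔ IsBoundary D k a b ∧
      applyRule r (phiK D k a ++ phiK D k b) =
        applyRule r (phiK D k a) ++ applyRule r (phiK D k b) := by
  refine ⟨fun h ↦ ⟨h.of_succ, ?_⟩, fun ⟨h, h'⟩ ↦ ?_⟩
  · rw [← h.of_succ, ← hr, ← hr, ← hr, h]
  · rw [IsBoundary, hr, h, h', hr, hr]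

/-- While `b` and `b ++ c` start with the same token, the same rules merge `a` with either. -/
theorem isBoundary_succ_append_right_iff (hb : b ≠ []) (hbc : IsBoundary D k b c) :
    IsBoundary D (k + 1) a (b ++ c) ↔ IsBoundary D (k + 1) a b := by
  have step {k : ℕ} (hbc : IsBoundary D k b c)
      (hk : IsBoundary D k a (b ++ c) ↔ IsBoundary D k a b) :
      IsBoundary D (k + 1) a (b ++ c) ↔ IsBoundary D (k + 1) a b := by
    rcases phiK_succ_eq_or D k with h | ⟨r, hr⟩
    · simpa only [IsBoundary, h] using hk
    · obtain ⟨u, φ, hφ⟩ := List.exists_cons_of_ne_nil (phiK_ne_nil (D := D) (k := k) hb)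
      have hu : u ≠ [] := ne_nil_of_mem_phiK D k b u (by simp [hφ])
      rw [isBoundary_succ_iff hr, isBoundary_succ_iff hr, hk, hbc, hφ, List.cons_append,
        applyRule_append_cons_iff r hu]
  induction k with
  | zero => exact step hbc (by simp [isBoundary_zero])
  | succ k ih => exact step hbc (ih hbc.of_succ)

theorem IsBoundary.append_left (hb : b ≠ []) (hab : IsBoundary D k a b)
    (hbc : IsBoundary D k b c) : IsBoundary D k (a ++ b) c := by
  have h : IsBoundary D k a (b ++ c) := by
    cases k with
    | zero => exact isBoundary_zero D a _
    | succ k => exact (isBoundary_succ_append_right_iff hb hbc.of_succ).2 hab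
  rw [IsBoundary, List.append_assoc, h, hab, hbc, List.append_assoc]

theorem IsBoundary.getLast?_phiK_append (hb : b ≠ []) (h : IsBoundary D k a b) :
    (phiK D k (a ++ b)).getLast? = (phiK D k b).getLast? := by
  rw [h, List.getLast?_append_of_ne_nil _ (phiK_ne_nil hb)]

theorem getLast?_phiK_append_eq_some_iff :
    (phiK D k (a ++ b)).getLast? = some b ↔ IsBoundary D k a b ∧ phiK D k b = [b] := by
  refine ⟨fun h ↦ ?_, fun ⟨h, hb⟩ ↦ by rw [h, hb, List.getLast?_concat]⟩
  obtain ⟨φ, hφ⟩ := List.getLast?_eq_some_iff.1 h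
  have ha : φ.flatten = a := by simpa [eq_comm] using congrArg List.flatten hφ
  constructor
  · simpa [ha] using isBoundary_flatten hφ
  · simpa using (phiK_flatten_of_eq_append hφ).2

end Boundary

section Canonical

variable {D : Dict α} {k : ℕ} {t : Token α}

theorem IsCanonical.ne_nil (hc : IsCanonical D t) : t ≠ [] :=
  ne_nil_of_mem_phiK D D.length t t (by rw [← tokenize, hc]; exact List.mem_singleton_self t)

theorem IsCanonical.length_eq_one_or (hc : IsCanonical D t) : t.length = 1 ∨ 1 < t.length := by
  have hpos := List.length_pos_of_ne_nil hc.ne_nil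
  omega

theorem exists_isCanonicalRuleIdx (ht : 1 < t.length) (hc : IsCanonical D t) :
    ∃ j, IsCanonicalRuleIdx D t j := by
  have h0 : phiK D 0 t ≠ [t] := fun h ↦ by
    have hlen : t.length = 1 := by simpa [phi0] using congrArg List.length h
    omega
  obtain ⟨j, hj, hj'⟩ := Nat.exists_not_and_succ_of_not_zero_of_exists
    (p := fun j ↦ phiK D j t = [t]) h0 ⟨D.length, hc⟩
  have hlt : j < D.length := not_le.1 fun hle ↦ hj (phiK_eq_singleton_of_le hc hle)
  have hle : (phiK D j t).length ≤ 2 := by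
    rcases phiK_succ_eq_or D j with h | ⟨r, h⟩
    · simp [← h, hj']
    · simpa [← h, hj'] using length_le_two_mul_length_applyRule r (phiK D j t)
  have hne_one : (phiK D j t).length ≠ 1 := fun h ↦ by
    obtain ⟨x, hx⟩ := List.length_eq_one_iff.1 h
    obtain rfl : x = t := by simpa [hx] using flatten_phiK D j t
    exact hj hx
  have hpos := List.length_pos_of_ne_nil (phiK_ne_nil (D := D) (k := j) hc.ne_nil)
  exact ⟨j, hlt, by omega, hj'⟩

theorem isCanonicalRuleIdx_canonIdx (ht : 1 < t.length) (hc : IsCanonical D t) :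
    IsCanonicalRuleIdx D t (canonIdx D t) := by
  have h := exists_isCanonicalRuleIdx ht hc
  rw [canonIdx, dif_pos h]
  exact h.choose_spec

theorem phiK_of_canonIdx_lt (ht : 1 < t.length) (hc : IsCanonical D t) (hk : canonIdx D t < k) :
    phiK D k t = [t] :=
  phiK_eq_singleton_of_le (isCanonicalRuleIdx_canonIdx ht hc).2.2 hk

theorem phiK_canonIdx (ht : 1 < t.length) (hc : IsCanonical D t) :
    phiK D (canonIdx D t) t = [pre D t, suc D t] := by
  obtain ⟨x, y, h⟩ := List.length_eq_two.1 (isCanonicalRuleIdx_canonIdx ht hc).2.1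
  simp [pre, suc, h]

theorem pre_append_suc (ht : 1 < t.length) (hc : IsCanonical D t) : pre D t ++ suc D t = t := by
  simpa [phiK_canonIdx ht hc] using flatten_phiK D (canonIdx D t) t

theorem isBoundary_pre_suc (ht : 1 < t.length) (hc : IsCanonical D t) :
    IsBoundary D (canonIdx D t) (pre D t) (suc D t) := by
  simpa using isBoundary_flatten (φ := [pre D t]) (phiK_canonIdx ht hc)

theorem phiK_canonIdx_pre (ht : 1 < t.length) (hc : IsCanonical D t) :
    phiK D (canonIdx D t) (pre D t) = [pre D t] := by
  simpa using (phiK_flatten_of_eq_append (c := [pre D t]) (phiK_canonIdx ht hc)).1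

theorem phiK_canonIdx_suc (ht : 1 < t.length) (hc : IsCanonical D t) :
    phiK D (canonIdx D t) (suc D t) = [suc D t] := by
  simpa using (phiK_flatten_of_eq_append (c := [pre D t]) (phiK_canonIdx ht hc)).2

theorem pre_ne_nil (ht : 1 < t.length) (hc : IsCanonical D t) : pre D t ≠ [] :=
  ne_nil_of_mem_phiK D (canonIdx D t) t _ (by simp [phiK_canonIdx ht hc])

theorem length_suc_lt (ht : 1 < t.length) (hc : IsCanonical D t) :
    (suc D t).length < t.length := by
  have hlen := congrArg List.length (pre_append_suc ht hc)
  have hpos := List.length_pos_of_ne_nil (pre_ne_nil ht hc)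
  rw [List.length_append] at hlen
  omega

theorem suc_of_length_eq_one (D : Dict α) (ht : t.length = 1) : suc D t = t := by
  simp [suc, phiK_of_length_eq_one ht]

theorem isCanonical_suc (hc : IsCanonical D t) : IsCanonical D (suc D t) := by
  rcases hc.length_eq_one_or with ht | ht
  · rwa [suc_of_length_eq_one D ht]
  · exact phiK_eq_singleton_of_le (phiK_canonIdx_suc ht hc)
      (isCanonicalRuleIdx_canonIdx ht hc).1.le

theorem canonIdx_suc_lt (ht : 1 < t.length) (hc : IsCanonical D t) (hs : 1 < (suc D t).length) :
    canonIdx D (suc D t) < canonIdx D t := by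
  by_contra! hle
  have h := phiK_eq_singleton_of_le (phiK_canonIdx_suc ht hc) hle
  simp [phiK_canonIdx hs (isCanonical_suc hc)] at h

theorem getLast?_phiK_suc (ht : 1 < t.length) (hc : IsCanonical D t) (hk : k ≤ canonIdx D t) :
    (phiK D k (suc D t)).getLast? = (phiK D k t).getLast? := by
  have h := ((isBoundary_pre_suc ht hc).of_le hk).getLast?_phiK_append (isCanonical_suc hc).ne_nil
  rw [← h, pre_append_suc ht hc]

@[elab_as_elim]
theorem IsCanonical.suc_induction {motive : ∀ t, IsCanonical D t → Prop}
    (atomic : ∀ t (hc : IsCanonical D t), t.length = 1 → motive t hc)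
    (nonatomic : ∀ t (hc : IsCanonical D t), 1 < t.length →
      motive (suc D t) (isCanonical_suc hc) → motive t hc)
    (t : Token α) (hc : IsCanonical D t) : motive t hc := by
  induction hn : t.length using Nat.strong_induction_on generalizing t with
  | _ n ih =>
    rcases hc.length_eq_one_or with ht | ht
    · exact atomic t hc ht
    · exact nonatomic t hc ht (ih _ (hn ▸ length_suc_lt ht hc) _ (isCanonical_suc hc) rfl)

end Canonical

section AncestorPath

variable {D : Dict α} {k : ℕ} {y u v : Token α}

theorem inPath_refl (D : Dict α) (y : Token α) : InPath D y y := ⟨0, rfl⟩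

theorem inPath_iff_eq_or : InPath D y v ↔ v = y ∨ InPath D (suc D y) v := by
  constructor
  · rintro ⟨_ | n, rfl⟩
    · exact .inl rfl
    · exact .inr ⟨n, rfl⟩
  · rintro (rfl | ⟨n, rfl⟩)
    · exact inPath_refl D v
    · exact ⟨n + 1, rfl⟩

theorem eq_of_inPath_of_length_eq_one (hy : y.length = 1) (h : InPath D y v) : v = y := by
  obtain ⟨n, rfl⟩ := h
  exact Function.iterate_fixed (suc_of_length_eq_one D hy) n

theorem length_le_of_inPath (hc : IsCanonical D y) (h : InPath D y v) : v.length ≤ y.length := by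
  induction y, hc using IsCanonical.suc_induction with
  | atomic y _ hy => rw [eq_of_inPath_of_length_eq_one hy h]
  | nonatomic y hc hy ih =>
    rcases inPath_iff_eq_or.1 h with rfl | h
    · rfl
    · exact (ih h).trans (length_suc_lt hy hc).le

theorem canonIdx_le_of_inPath (hc : IsCanonical D y) (hv : 1 < v.length) (h : InPath D y v) :
    canonIdx D v ≤ canonIdx D y := by
  induction y, hc using IsCanonical.suc_induction with
  | atomic y _ hy => rw [eq_of_inPath_of_length_eq_one hy h]
  | nonatomic y hc hy ih =>
    rcases inPath_iff_eq_or.1 h with rfl | h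
    · rfl
    · have hs := hv.trans_le (length_le_of_inPath (isCanonical_suc hc) h)
      exact (ih h).trans (canonIdx_suc_lt hy hc hs).le

theorem exists_child_of_inPath (hc : IsCanonical D y) (h : InPath D y v) (hne : y ≠ v) :
    ∃ u, 1 < u.length ∧ IsCanonical D u ∧ suc D u = v ∧ InPath D y u := by
  induction y, hc using IsCanonical.suc_induction with
  | atomic y _ hy => exact absurd (eq_of_inPath_of_length_eq_one hy h).symm hne
  | nonatomic y hc hy ih =>
    by_cases hs : suc D y = v
    · exact ⟨y, hy, hc, hs, inPath_refl D y⟩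
    · obtain ⟨u, hu, huc, hus, hyu⟩ := ih ((inPath_iff_eq_or.1 h).resolve_left hne.symm) hs
      exact ⟨u, hu, huc, hus, inPath_iff_eq_or.2 (.inr hyu)⟩

theorem getLast?_phiK_of_inPath (hc : IsCanonical D y) (h : InPath D y v) (hv : 1 < v.length)
    (hk : k ≤ canonIdx D v) : (phiK D k y).getLast? = (phiK D k v).getLast? := by
  induction y, hc using IsCanonical.suc_induction with
  | atomic y _ hy => rw [eq_of_inPath_of_length_eq_one hy h]
  | nonatomic y hc hy ih =>
    have hky := hk.trans (canonIdx_le_of_inPath hc hv h)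
    rcases inPath_iff_eq_or.1 h with rfl | h
    · rfl
    · rw [← getLast?_phiK_suc hy hc hky, ih h]

theorem inPath_of_getLast?_phiK (hc : IsCanonical D y) (h : (phiK D k y).getLast? = some v) :
    InPath D y v := by
  induction y, hc using IsCanonical.suc_induction with
  | atomic y _ hy =>
    obtain rfl : y = v := by simpa [phiK_of_length_eq_one hy] using h
    exact inPath_refl D y
  | nonatomic y hc hy ih =>
    rcases lt_or_ge (canonIdx D y) k with hk | hk
    · obtain rfl : y = v := by simpa [phiK_of_canonIdx_lt hy hc hk] using h
      exact inPath_refl D y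
    · exact inPath_iff_eq_or.2 (.inr (ih (getLast?_phiK_suc hy hc hk ▸ h)))

theorem inPath_of_inPath_of_getLast?_phiK (hc : IsCanonical D y) (hu : phiK D k u = [u])
    (hyu : InPath D y u) (h : (phiK D k y).getLast? = some v) : InPath D v u := by
  induction y, hc using IsCanonical.suc_induction with
  | atomic y _ hy =>
    obtain rfl : y = v := by simpa [phiK_of_length_eq_one hy] using h
    exact hyu
  | nonatomic y hc hy ih =>
    rcases inPath_iff_eq_or.1 hyu with rfl | hsu
    · obtain rfl : u = v := by simpa [hu] using h
      exact hyu
    rcases lt_or_ge (canonIdx D y) k with hk | hk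
    · obtain rfl : y = v := by simpa [phiK_of_canonIdx_lt hy hc hk] using h
      exact hyu
    · exact ih hsu (getLast?_phiK_suc hy hc hk ▸ h)

theorem getLast?_phiK_eq_some_iff (hc : IsCanonical D y) (hvc : IsCanonical D v)
    (hv : phiK D k v = [v]) :
    (phiK D k y).getLast? = some v ↔
      InPath D y v ∧ (y ≠ v → ∀ u : Token α, 1 < u.length → IsCanonical D u → suc D u = v →
        InPath D y u → k ≤ canonIdx D u) := by
  constructor
  · refine fun h ↦ ⟨inPath_of_getLast?_phiK hc h, ?_⟩
    rintro - u hu huc rfl hyu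
    by_contra! hk
    have hsu :=
      inPath_of_inPath_of_getLast?_phiK hc (phiK_of_canonIdx_lt hu huc hk) hyu h
    exact (length_suc_lt hu huc).not_ge (length_le_of_inPath hvc hsu)
  · rintro ⟨hyv, hdom⟩
    by_cases hne : y = v
    · simp [hne, hv]
    · obtain ⟨u, hu, huc, rfl, hyu⟩ := exists_child_of_inPath hc hyv hne
      have hk := hdom hne u hu huc rfl hyu
      rw [getLast?_phiK_of_inPath hc hyu hu hk, ← getLast?_phiK_suc hu huc hk, hv,
        List.getLast?_singleton]

end AncestorPath

section PrefixLastToken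

variable {D : Dict α} {k : ℕ} {a s : List α} {t : Token α}

theorem getLast?_tokenize (D : Dict α) (hs : s ≠ []) :
    (tokenize D s).getLast? = some (theta D s) := by
  have h := List.getLast?_eq_some_getLast (phiK_ne_nil (D := D) (k := D.length) hs)
  rw [theta, List.getLastD_eq_getLast?, tokenize, h, Option.getD_some]

theorem isCanonical_theta (D : Dict α) (hs : s ≠ []) : IsCanonical D (theta D s) := by
  obtain ⟨φ, hφ⟩ := List.getLast?_eq_some_iff.1 (getLast?_tokenize D hs)
  simpa [IsCanonical, tokenize] using (phiK_flatten_of_eq_append hφ).2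

theorem getLast?_phiK_theta (hs : s ≠ []) (hk : k ≤ D.length) :
    (phiK D k (theta D s)).getLast? = (phiK D k s).getLast? := by
  obtain ⟨φ, hφ⟩ := List.getLast?_eq_some_iff.1 (getLast?_tokenize D hs)
  have hs' : s = φ.flatten ++ theta D s := by
    simpa [tokenize] using congrArg List.flatten hφ
  have hb : IsBoundary D D.length φ.flatten (theta D s) := by simpa using isBoundary_flatten hφ
  have h := (hb.of_le hk).getLast?_phiK_append (isCanonical_theta D hs).ne_nil
  rw [← h, ← hs']

theorem dropSuffix_append_suc (a : List α) (ht : 1 < t.length) (hc : IsCanonical D t) :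
    dropSuffix (a ++ t) (suc D t) = a ++ pre D t := by
  calc dropSuffix (a ++ t) (suc D t)
      = dropSuffix ((a ++ pre D t) ++ suc D t) (suc D t) := by
        rw [List.append_assoc, pre_append_suc ht hc]
    _ = a ++ pre D t := List.take_left' (by simp only [List.length_append]; omega)

/-- As `canonIdx` is 0-based, stage `canonIdx D t + 1` is the one just after the canonical rule of
`t` has been applied. -/
theorem pltc_append_iff_isBoundary (ht : 1 < t.length) (hc : IsCanonical D t) :
    PLTC D (a ++ t) t ↔ IsBoundary D (canonIdx D t + 1) a (pre D t) := by
  obtain ⟨hidx, -, -⟩ := isCanonicalRuleIdx_canonIdx ht hc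
  have hpre : phiK D (canonIdx D t + 1) (pre D t) = [pre D t] :=
    phiK_eq_singleton_of_le (phiK_canonIdx_pre ht hc) (Nat.le_succ _)
  have hprec : IsCanonical D (pre D t) := phiK_eq_singleton_of_le hpre hidx
  have hs : a ++ pre D t ≠ [] := List.append_ne_nil_of_right_ne_nil a hprec.ne_nil
  calc PLTC D (a ++ t) t
      ↔ (phiK D (canonIdx D t + 1) (theta D (a ++ pre D t))).getLast? = some (pre D t) := by
        rw [getLast?_phiK_eq_some_iff (isCanonical_theta D hs) hprec hpre, PLTC,
          dropSuffix_append_suc a ht hc]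
        simp only [ht, ht.ne', true_and, false_or, Nat.succ_le_iff]
    _ ↔ (phiK D (canonIdx D t + 1) (a ++ pre D t)).getLast? = some (pre D t) := by
        rw [getLast?_phiK_theta hs hidx]
    _ ↔ IsBoundary D (canonIdx D t + 1) a (pre D t) := by
        rw [getLast?_phiK_append_eq_some_iff, and_iff_left hpre]

end PrefixLastToken

theorem upward_closure_general {D : Dict α} {s : List α} {w : Token α} (hwl : 1 < w.length)
    (hwc : IsCanonical D w) (hws : w <:+ s) (h : PLTC D s w) :
    IsCanonical D (suc D w) ∧ suc D w <:+ s ∧ PLTC D s (suc D w) := by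
  obtain ⟨a, rfl⟩ := hws
  have hqc := isCanonical_suc hwc
  have hw : a ++ w = (a ++ pre D w) ++ suc D w := by rw [List.append_assoc, pre_append_suc hwl hwc]
  refine ⟨hqc, ⟨_, hw.symm⟩, ?_⟩
  rcases hqc.length_eq_one_or with hql | hql
  · exact .inl hql
  rw [hw, pltc_append_iff_isBoundary hql hqc]
  have hidx := canonIdx_suc_lt hwl hwc hql
  have hap : IsBoundary D (canonIdx D (suc D w) + 1) a (pre D w) :=
    ((pltc_append_iff_isBoundary hwl hwc).1 h).of_le (by omega)
  have hpp' : IsBoundary D (canonIdx D (suc D w) + 1) (pre D w) (pre D (suc D w)) := by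
    rw [← isBoundary_succ_append_right_iff (pre_ne_nil hql hqc) (isBoundary_pre_suc hql hqc),
      pre_append_suc hql hqc]
    exact (isBoundary_pre_suc hwl hwc).of_le hidx
  exact hap.append_left (pre_ne_nil hwl hwc) hpp'

/-- **Upward closure of the Prefix Last-Token Condition.** If a non-atomic canonical
suffix `w` of the nonempty string `s` satisfies the Prefix Last-Token Condition with
respect to `s`, then `suc w` (also a canonical suffix of `s`) satisfies it too. -/
theorem upward_closure [Fintype α] (D : Dict α) (hD : ValidDict D)
    (s : List α) (hs : s ≠ [])
    (w : Token α) (hwl : 1 < w.length) (hwc : IsCanonical D w) (hws : w <:+ s)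
    (h : PLTC D s w) :
    IsCanonical D (suc D w) ∧ suc D w <:+ s ∧ PLTC D s (suc D w) :=
  upward_closure_general hwl hwc hws h

end BPE
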